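/- Suppose F satisfies (G1) and (G2). Let μ ∈ L_θ^+ be a positive measure with a disintegration ω along the vertical fibers, and define the path μ_F(γ) = (F_γ)_*(μ|_γ), where F_γ : K → K is the fiber map F_γ(z) = G(γ,z). Then the ‖·‖_W-Lipschitz constant of the path μ_F satisfies |μ_F|_θ ≤ |μ|_θ^ω + H ‖μ‖_∞, i.e. ess sup_{γ₁≠γ₂} ‖μ_F(γ₁) − μ_F(γ₂)‖_W / d_θ(γ₁,γ₂) ≤ |μ|_θ^ω + H‖μ‖_∞. -/

import Mathlib

open MeasureTheory ENNReal Set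

namespace RDS

/-- The one-sided subshift of finite type `Σ_A^+` determined by the 0-1 matrix `A`. -/
abbrev SigmaA (N : ℕ) (A : Fin N → Fin N → Bool) :=
  {x : ℕ → Fin N // ∀ i, A (x i) (x (i + 1)) = true}

variable {N : ℕ} {A : Fin N → Fin N → Bool}

/-- The shift map `σ` on `Σ_A^+`. -/
def shift (x : SigmaA N A) : SigmaA N A :=
  ⟨fun i => x.val (i + 1), fun i => x.prop (i + 1)⟩

/-- Aperiodicity of a 0-1 matrix: some power has all entries positive. -/
def Aperiodic (A : Fin N → Fin N → Bool) : Prop :=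
  ∃ k : ℕ, 0 < k ∧ ∀ i j,
    0 < ((Matrix.of fun a b => if A a b then (1 : ℕ) else 0) ^ k) i j

/-- The metric `d_θ(x,y) = Σ_i θ^i (1 - δ(x_i, y_i))` on `Σ_A^+`. -/
noncomputable def dTheta (θ : ℝ) (x y : SigmaA N A) : ℝ :=
  ∑' i : ℕ, θ ^ i * (if x.val i = y.val i then (0 : ℝ) else 1)

/-- Cylinder sets of `Σ_A^+`. -/
def cylinder (n : ℕ) (w : Fin (n + 1) → Fin N) : Set (SigmaA N A) :=
  {x | ∀ i : Fin (n + 1), x.val i = w i}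

/-- `m` is a Markov measure on `Σ_A^+` compatible with `A`: it is given on
cylinders by a stochastic matrix `P` (vanishing where `A` vanishes) and a
stationary probability vector `p`. -/
def IsMarkov (m : Measure (SigmaA N A)) : Prop :=
  ∃ (p : Fin N → ℝ≥0∞) (P : Fin N → Fin N → ℝ≥0∞),
    (∑ i, p i = 1) ∧ (∀ i, ∑ j, P i j = 1) ∧ (∀ j, ∑ i, p i * P i j = p j) ∧
    (∀ i j, A i j = false → P i j = 0) ∧
    ∀ (n : ℕ) (w : Fin (n + 1) → Fin N),
      m (cylinder n w) = p (w 0) * ∏ i : Fin n, P (w i.castSucc) (w i.succ)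

/-- `σ_i⁻¹(γ)`: the sequence `γ` with the symbol `i` prepended
(defined when `A i γ₀ = 1`), i.e. the inverse branch of the restriction `σ_i`
of `σ` to the cylinder `[i]`. -/
def prepend (i : Fin N) (x : SigmaA N A) (h : A i (x.val 0) = true) : SigmaA N A :=
  ⟨fun n => match n with
    | 0 => i
    | Nat.succ k => x.val k,
   fun j => match j with
    | 0 => h
    | Nat.succ k => x.prop k⟩

/-- `f` is `L`-Lipschitz with respect to the distance function `d`. -/
def LipWithD {X : Type*} (d : X → X → ℝ) (L : ℝ) (f : X → ℝ) : Prop :=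
  ∀ x y, |f x - f y| ≤ L * d x y

/-- `f` is Lipschitz with respect to the distance function `d`. -/
def LipD {X : Type*} (d : X → X → ℝ) (f : X → ℝ) : Prop :=
  ∃ L : ℝ, LipWithD d L f

/-- The best Lipschitz constant of `f` with respect to `d` (valued in `ℝ≥0∞`). -/
noncomputable def lipConst {X : Type*} (d : X → X → ℝ) (f : X → ℝ) : ℝ≥0∞ :=
  ⨆ (x : X) (y : X), ENNReal.ofReal (|f x - f y| / d x y)

/-- The sup norm of `f` (valued in `ℝ≥0∞`). -/
noncomputable def supNormE {X : Type*} (f : X → ℝ) : ℝ≥0∞ :=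
  ⨆ x : X, ENNReal.ofReal |f x|

/-- The norm `‖f‖_θ = ‖f‖_∞ + Lip_d(f)`. -/
noncomputable def thetaNorm {X : Type*} (d : X → X → ℝ) (f : X → ℝ) : ℝ≥0∞ :=
  supNormE f + lipConst d f

/-- The Perron-Frobenius operator duality characterizing `P_σ`:
`∫ P_σ(φ) · ψ dm = ∫ φ · (ψ ∘ σ) dm` for integrable `φ` and bounded measurable `ψ`. -/
def IsPerronFrobenius (m : Measure (SigmaA N A))
    (Pσ : (SigmaA N A → ℝ) → SigmaA N A → ℝ) : Prop :=
  ∀ φ ψ : SigmaA N A → ℝ, Integrable φ m → Measurable ψ → (∃ C, ∀ x, |ψ x| ≤ C) →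
    ∫ x, Pσ φ x * ψ x ∂m = ∫ x, φ x * ψ (shift x) ∂m

/-- Spectral gap for `P_σ` on `d_θ`-Lipschitz functions with constants `D`, `r`:
`‖P_σ^n φ‖_θ ≤ D r^n ‖φ‖_θ` for all `n` and all `d_θ`-Lipschitz `φ` with
`∫ φ dm = 0`. -/
def HasGap (m : Measure (SigmaA N A)) (θ : ℝ)
    (Pσ : (SigmaA N A → ℝ) → SigmaA N A → ℝ) (D r : ℝ) : Prop :=
  ∀ φ : SigmaA N A → ℝ, LipD (dTheta θ) φ → (∫ x, φ x ∂m) = 0 →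
    ∀ n : ℕ, thetaNorm (dTheta θ) (Pσ^[n] φ) ≤
      ENNReal.ofReal (D * r ^ n) * thetaNorm (dTheta θ) φ

/-- `Jm i` is the Jacobian `J_{m,σ_i}` of `m` with respect to the branch `σ_i`
(the restriction of `σ` to the cylinder `[i]`): `m (σ_i(E)) = ∫_E J_{m,σ_i} dm`
for every measurable `E` (intersected with `[i]`). -/
def IsJacobian (m : Measure (SigmaA N A)) (Jm : Fin N → SigmaA N A → ℝ) : Prop :=
  ∀ (i : Fin N) (E : Set (SigmaA N A)), MeasurableSet E →
    m {γ : SigmaA N A | ∃ h : A i (γ.val 0) = true, prepend i γ h ∈ E} =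
      ∫⁻ x in E ∩ {x : SigmaA N A | x.val 0 = i}, ENNReal.ofReal (Jm i x) ∂m

variable {K : Type*} [MetricSpace K] [MeasurableSpace K]

/-- The Wasserstein-Kantorovich like distance `W(ν₁,ν₂)`: the supremum of
`|∫ g dν₁ - ∫ g dν₂|` over `g : K → ℝ` with `Lip(g) ≤ 1` and `‖g‖_∞ ≤ 1`.
Applied with `ν₂ = 0` it gives the norm `‖ν₁‖_W`; applied to the two parts of a
decomposition of a signed measure it gives its `‖·‖_W` norm. -/
noncomputable def wDist (ν₁ ν₂ : Measure K) : ℝ≥0∞ :=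
  ⨆ g : {g : K → ℝ // LipschitzWith 1 g ∧ ∀ z, |g z| ≤ 1},
    ENNReal.ofReal |∫ z, g.val z ∂ν₁ - ∫ z, g.val z ∂ν₂|

/-- The skew product `F(x,z) = (σ(x), G(x,z))`. -/
def skew (G : SigmaA N A × K → K) (p : SigmaA N A × K) : SigmaA N A × K :=
  (shift p.1, G p)

/-- The transfer operator `F^* μ (E) = μ (F⁻¹ E)` acting on signed measures. -/
noncomputable def transfer (G : SigmaA N A × K → K)
    (μ : SignedMeasure (SigmaA N A × K)) : SignedMeasure (SigmaA N A × K) :=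
  μ.map (skew G)

/-- Condition (G1): uniform contraction of the vertical fibers with rate `α`. -/
def CondG1 (G : SigmaA N A × K → K) (α : ℝ) : Prop :=
  ∀ (x : SigmaA N A) (z₁ z₂ : K), dist (G (x, z₁)) (G (x, z₂)) ≤ α * dist z₁ z₂

/-- Condition (G2): `x ↦ G(x,z)` is `d_θ`-Lipschitz with constant `H`,
uniformly in `z`. -/
def CondG2 (θ : ℝ) (G : SigmaA N A × K → K) (H : ℝ) : Prop :=
  ∀ (z : K) (x y : SigmaA N A), dist (G (x, z)) (G (y, z)) ≤ H * dTheta θ x y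

/-- `T` is (the path `γ ↦ μ|_γ` of) a disintegration of `μ` along the vertical
fibers, over the reference measure `m`: `μ(E) = ∫ (μ|_γ)(E ∩ γ) dm(γ)`. -/
def IsDisint (m : Measure (SigmaA N A)) (μ : Measure (SigmaA N A × K))
    (T : SigmaA N A → Measure K) : Prop :=
  (∀ E : Set (SigmaA N A × K), MeasurableSet E →
      μ E = ∫⁻ γ, T γ {z | (γ, z) ∈ E} ∂m) ∧
  ∀ E : Set K, MeasurableSet E → Measurable fun γ => T γ E

/-- The (essential) `‖·‖_W`-Lipschitz constant of a path of measures,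
`|Γ|_θ^ω = ess sup_{γ₁ ≠ γ₂} ‖Γ(γ₁) - Γ(γ₂)‖_W / d_θ(γ₁,γ₂)`. -/
noncomputable def pathLip (m : Measure (SigmaA N A)) (θ : ℝ)
    (T : SigmaA N A → Measure K) : ℝ≥0∞ :=
  essSup (fun p : SigmaA N A × SigmaA N A =>
    wDist (T p.1) (T p.2) / ENNReal.ofReal (dTheta θ p.1 p.2)) (m.prod m)

/-- The Lipschitz constant `|μ|_θ` of a positive measure: the infimum over
disintegrations `ω` of `μ` of `|μ|_θ^ω`. -/
noncomputable def lipDisint (m : Measure (SigmaA N A)) (θ : ℝ)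
    (μ : Measure (SigmaA N A × K)) : ℝ≥0∞ :=
  ⨅ T : {T : SigmaA N A → Measure K // IsDisint m μ T}, pathLip m θ T.val

/-- The fiberwise transfer formula: the path representing `F^*μ` induced by the
path `T` representing `μ`, i.e.
`γ ↦ Σ_i 1_{σ([i])}(γ) (F_{iγ})_*(T(iγ)) / J_{m,σ_i}(iγ)`. -/
noncomputable def transferPath (G : SigmaA N A × K → K) (Jm : Fin N → SigmaA N A → ℝ)
    (T : SigmaA N A → Measure K) : SigmaA N A → Measure K :=
  fun γ => ∑ i : Fin N, if h : A i (γ.val 0) = true then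
      ENNReal.ofReal ((Jm i (prepend i γ h))⁻¹) •
        ((T (prepend i γ h)).map fun z => G (prepend i γ h, z))
    else 0

variable [BorelSpace K] [CompactSpace K] [Nonempty K]

/-- The fiberwise restriction `μ|_γ = π₂_* (φ₁(γ) μ_γ)` of a finite positive
measure `μ` on `Σ_A^+ × K`, where `({μ_γ}_γ, φ₁ m)` is the Rokhlin
disintegration of `μ` along the vertical fibers and `φ₁ = d(π₁_*μ)/dm`. -/
noncomputable def fiberR (m : Measure (SigmaA N A))
    (μ : Measure (SigmaA N A × K)) (γ : SigmaA N A) : Measure K := by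
  by_cases h : IsFiniteMeasure μ
  · haveI := h
    exact (μ.fst.rnDeriv m γ) • μ.condKernel γ
  · exact 0

/-- The norm `‖μ‖_∞ = ess sup_γ ‖μ|_γ‖_W` of a signed measure written as a
difference `μ = μ₁ - μ₂` of positive measures. -/
noncomputable def infNormPair (m : Measure (SigmaA N A))
    (μ₁ μ₂ : Measure (SigmaA N A × K)) : ℝ≥0∞ :=
  essSup (fun γ => wDist (fiberR m μ₁ γ) (fiberR m μ₂ γ)) m

/-- The marginal density `φ₁ = d(π₁_*μ)/dm` of the signed measure `μ = μ₁ - μ₂`. -/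
noncomputable def phiPair (m : Measure (SigmaA N A))
    (μ₁ μ₂ : Measure (SigmaA N A × K)) (γ : SigmaA N A) : ℝ :=
  (μ₁.fst.rnDeriv m γ).toReal - (μ₂.fst.rnDeriv m γ).toReal

/-- Membership in `AB`: both parts are finite with first marginal absolutely
continuous with respect to `m`. -/
def MemABPair (m : Measure (SigmaA N A)) (μ₁ μ₂ : Measure (SigmaA N A × K)) : Prop :=
  μ₁.fst ≪ m ∧ μ₂.fst ≪ m ∧ IsFiniteMeasure μ₁ ∧ IsFiniteMeasure μ₂

/-- Membership in `S^∞`: `μ ∈ AB`, `‖μ‖_∞ < ∞` and the marginal density `φ₁`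
has a `d_θ`-Lipschitz version. -/
def MemSPair (m : Measure (SigmaA N A)) (θ : ℝ)
    (μ₁ μ₂ : Measure (SigmaA N A × K)) : Prop :=
  MemABPair m μ₁ μ₂ ∧ infNormPair m μ₁ μ₂ < ⊤ ∧
    ∃ ψ : SigmaA N A → ℝ, ψ =ᵐ[m] phiPair m μ₁ μ₂ ∧ LipD (dTheta θ) ψ

/-- `‖φ₁‖_θ`, computed on the best version of the marginal density. -/
noncomputable def thetaNormMu (m : Measure (SigmaA N A)) (θ : ℝ)
    (μ₁ μ₂ : Measure (SigmaA N A × K)) : ℝ≥0∞ :=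
  ⨅ ψ : {ψ : SigmaA N A → ℝ // ψ =ᵐ[m] phiPair m μ₁ μ₂}, thetaNorm (dTheta θ) ψ.val

/-- The norm `‖μ‖_{S^∞} = ‖φ₁‖_θ + ‖μ‖_∞`. -/
noncomputable def sNormPair (m : Measure (SigmaA N A)) (θ : ℝ)
    (μ₁ μ₂ : Measure (SigmaA N A × K)) : ℝ≥0∞ :=
  thetaNormMu m θ μ₁ μ₂ + infNormPair m μ₁ μ₂

/-- Positive part of a signed measure. -/
noncomputable def jPos {X : Type*} [MeasurableSpace X] (μ : SignedMeasure X) : Measure X :=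
  μ.toJordanDecomposition.posPart

/-- Negative part of a signed measure. -/
noncomputable def jNeg {X : Type*} [MeasurableSpace X] (μ : SignedMeasure X) : Measure X :=
  μ.toJordanDecomposition.negPart

/-- Membership in `AB` for signed measures. -/
def MemAB (m : Measure (SigmaA N A)) (μ : SignedMeasure (SigmaA N A × K)) : Prop :=
  MemABPair m (jPos μ) (jNeg μ)

/-- Membership in `S^∞` for signed measures. -/
def MemS (m : Measure (SigmaA N A)) (θ : ℝ) (μ : SignedMeasure (SigmaA N A × K)) : Prop :=
  MemSPair m θ (jPos μ) (jNeg μ)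

/-- `‖μ‖_∞` for signed measures. -/
noncomputable def infNorm (m : Measure (SigmaA N A))
    (μ : SignedMeasure (SigmaA N A × K)) : ℝ≥0∞ :=
  infNormPair m (jPos μ) (jNeg μ)

/-- `‖μ‖_{S^∞}` for signed measures. -/
noncomputable def sNorm (m : Measure (SigmaA N A)) (θ : ℝ)
    (μ : SignedMeasure (SigmaA N A × K)) : ℝ≥0∞ :=
  sNormPair m θ (jPos μ) (jNeg μ)

/-- `‖φ₁‖_∞` of the marginal density of a signed measure. -/
noncomputable def phiSup (m : Measure (SigmaA N A))
    (μ : SignedMeasure (SigmaA N A × K)) : ℝ≥0∞ :=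
  essSup (fun γ => ENNReal.ofReal |phiPair m (jPos μ) (jNeg μ) γ|) m

theorem dTheta_nonneg' {N : ℕ} {A : Fin N → Fin N → Bool} {θ : ℝ} (hθ0 : 0 < θ)
    (x y : SigmaA N A) : 0 ≤ dTheta θ x y := by
  unfold dTheta
  refine tsum_nonneg fun i => mul_nonneg (pow_nonneg hθ0.le i) ?_
  split_ifs <;> norm_num

theorem pair_bound {K : Type*} [MetricSpace K] [CompactSpace K]
    [MeasurableSpace K] [BorelSpace K] (f₁ f₂ : K → K)
    (h₁ : LipschitzWith 1 f₁) (h₂ : LipschitzWith 1 f₂) (c : ℝ)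
    (hc : ∀ z, dist (f₁ z) (f₂ z) ≤ c) (ν₁ ν₂ : Measure K)
    [IsFiniteMeasure ν₁] [IsFiniteMeasure ν₂] :
    wDist (ν₁.map f₁) (ν₂.map f₂) ≤ wDist ν₁ ν₂ + ENNReal.ofReal c * wDist ν₂ 0 := by
  have hone : ν₂ univ ≤ wDist ν₂ 0 := by
    unfold wDist
    refine le_trans ?_ (le_iSup _ ⟨fun _ => (1 : ℝ), LipschitzWith.const' 1, by simp⟩)
    simp [Measure.real]
  refine le_trans ?_ (add_le_add le_rfl (mul_le_mul_right hone _))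
  conv_lhs => unfold wDist
  refine iSup_le ?_
  rintro ⟨g, hg, hb⟩
  have hgf₁ : LipschitzWith 1 (fun z => g (f₁ z)) := by
    simpa [Function.comp_def] using hg.comp h₁
  have hgf₂ : LipschitzWith 1 (fun z => g (f₂ z)) := by
    simpa [Function.comp_def] using hg.comp h₂
  have int : ∀ (k : K → ℝ), LipschitzWith 1 k → (∀ z, |k z| ≤ 1) → Integrable k ν₂ := by
    intro k hk hkb
    exact Integrable.of_bound hk.continuous.aestronglyMeasurable 1
      (Filter.Eventually.of_forall fun z => by simpa using hkb z)
  have i₁ := int _ hgf₁ (fun z => hb _)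
  have i₂ := int _ hgf₂ (fun z => hb _)
  simp only
  rw [integral_map h₁.continuous.aemeasurable hg.continuous.aestronglyMeasurable,
    integral_map h₂.continuous.aemeasurable hg.continuous.aestronglyMeasurable]
  have hdiff : |∫ z, g (f₁ z) ∂ν₂ - ∫ z, g (f₂ z) ∂ν₂| ≤ c * ν₂.real univ := by
    rw [← integral_sub i₁ i₂, ← Real.norm_eq_abs]
    refine norm_integral_le_of_norm_le_const (Filter.Eventually.of_forall fun z => ?_)
    have := hg.dist_le_mul (f₁ z) (f₂ z)
    rw [Real.dist_eq] at this
    simp only [NNReal.coe_one, one_mul] at this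
    exact this.trans (hc z)
  calc _ ≤ ENNReal.ofReal (|∫ z, g (f₁ z) ∂ν₁ - ∫ z, g (f₁ z) ∂ν₂| + c * ν₂.real univ) := by
        apply ENNReal.ofReal_le_ofReal
        have := abs_sub_le (∫ z, g (f₁ z) ∂ν₁) (∫ z, g (f₁ z) ∂ν₂) (∫ z, g (f₂ z) ∂ν₂)
        linarith
    _ ≤ _ := by
        refine ENNReal.ofReal_add_le.trans (add_le_add ?_ ?_)
        · exact le_iSup (fun g : {g : K → ℝ // LipschitzWith 1 g ∧ ∀ z, |g z| ≤ 1} =>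
            ENNReal.ofReal |∫ z, g.val z ∂ν₁ - ∫ z, g.val z ∂ν₂|)
            ⟨fun z => g (f₁ z), hgf₁, fun z => hb _⟩
        · rw [ENNReal.ofReal_mul' measureReal_nonneg]
          simp [Measure.real]

/-- Under (G1) and (G2), for a positive measure
`μ ∈ L_θ^+` with disintegration (path) `T`, the image path
`μ_F(γ) = (F_γ)_*(μ|_γ)` satisfies `|μ_F|_θ ≤ |μ|_θ^ω + H ‖μ‖_∞`. -/
theorem pushed_path_lipschitz_bound
    (N : ℕ) (A : Fin N → Fin N → Bool) (hA : Aperiodic A)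
    (θ : ℝ) (hθ0 : 0 < θ) (hθ1 : θ < 1)
    (m : Measure (SigmaA N A)) [IsProbabilityMeasure m]
    (hmM : IsMarkov m) (hminv : m.map shift = m)
    {K : Type*} [MetricSpace K] [CompactSpace K] [Nonempty K]
    [MeasurableSpace K] [BorelSpace K]
    (hdiam : Metric.diam (Set.univ : Set K) = 1)
    (G : SigmaA N A × K → K) (hGm : Measurable (skew G))
    (α : ℝ) (hα0 : 0 < α) (hα1 : α < 1) (hG1 : CondG1 G α)
    (H : ℝ) (hG2 : CondG2 θ G H)
    (μ : Measure (SigmaA N A × K)) [IsFiniteMeasure μ]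
    (hAC : μ.fst ≪ m) (hLtheta : lipDisint m θ μ < ⊤)
    (T : SigmaA N A → Measure K) (hT : IsDisint m μ T) :
    pathLip m θ (fun γ => (T γ).map fun z => G (γ, z)) ≤
      pathLip m θ T + ENNReal.ofReal H * essSup (fun γ => wDist (T γ) 0) m := by
  have hfin : ∀ᵐ γ ∂m, T γ univ < ⊤ := by
    refine ae_lt_top (hT.2 univ MeasurableSet.univ) ?_
    have := hT.1 univ MeasurableSet.univ
    simp only [mem_univ, ofPred_true] at this
    rw [← this]
    exact measure_ne_top μ univ
  have hsup : ∀ᵐ γ ∂m, wDist (T γ) 0 ≤ essSup (fun γ => wDist (T γ) 0) m := ENNReal.ae_le_essSup _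
  have hlip : ∀ γ, LipschitzWith 1 (fun z => G (γ, z)) := by
    intro γ
    refine LipschitzWith.of_dist_le_mul fun a b => (hG1 γ a b).trans ?_
    have := dist_nonneg (x := a) (y := b)
    simp only [NNReal.coe_one]
    gcongr
  conv_lhs => unfold pathLip
  refine essSup_le_of_ae_le _ ?_
  have q1 : Measure.QuasiMeasurePreserving Prod.fst (m.prod m) m :=
    Measure.quasiMeasurePreserving_fst
  have q2 : Measure.QuasiMeasurePreserving Prod.snd (m.prod m) m :=
    Measure.quasiMeasurePreserving_snd
  have hpl : ∀ᵐ p ∂(m.prod m),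
      wDist (T p.1) (T p.2) / ENNReal.ofReal (dTheta θ p.1 p.2) ≤ pathLip m θ T :=
    ENNReal.ae_le_essSup _
  filter_upwards [q1.ae hfin, q2.ae hfin, q2.ae hsup, hpl] with p hp1 hp2 hp3 hp4
  haveI : IsFiniteMeasure (T p.1) := ⟨hp1⟩
  haveI : IsFiniteMeasure (T p.2) := ⟨hp2⟩
  have key := pair_bound _ _ (hlip p.1) (hlip p.2) _ (fun z => hG2 z p.1 p.2) (T p.1) (T p.2)
  rw [ENNReal.ofReal_mul' (dTheta_nonneg' hθ0 _ _)] at key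
  refine (ENNReal.div_le_div_right key _).trans ?_
  rw [ENNReal.add_div]
  refine add_le_add hp4 ?_
  calc _ = ENNReal.ofReal H * wDist (T p.2) 0 *
        (ENNReal.ofReal (dTheta θ p.1 p.2) / ENNReal.ofReal (dTheta θ p.1 p.2)) := by
        simp only [div_eq_mul_inv]; ring
    _ ≤ ENNReal.ofReal H * wDist (T p.2) 0 * 1 := by
        gcongr; exact ENNReal.div_self_le_one
    _ ≤ _ := by rw [mul_one]; gcongr
end RDS
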